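/- If an idempotent magma M satisfies the identity (x*y)*(u*v) = (x*u) * s(y,v) for all x,y,u,v in M, for some binary term s, then M is medial. -/

import Mathlib

/-- Evaluation of a binary term (an element of the free magma on two
generators) in a magma `M` under the assignment `0 ↦ a`, `1 ↦ b`. -/
def evalBin {M : Type*} [Mul M] (t : FreeMagma (Fin 2)) (a b : M) : M :=
  FreeMagma.lift ![a, b] t

/-!
By idempotence, `x * s y v = (x * y) * (x * v)`: the right action of `s y v` is determined by those
of `y` and `v`. Mediality says that it is the right action of `y * v`, so it follows from left
self-distributivity. The latter comes from the absorption law `(x * y) * s x y = x * y`: padding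
the second factor of `(x * y) * (x * z)` in this way makes the identity applicable once more.
-/

namespace GeneralizedEntropic

variable {M : Type*} [Mul M] {s : M → M → M}

theorem mul_mul_op_eq_mul (hidem : ∀ x : M, x * x = x)
    (h : ∀ x y u v : M, (x * y) * (u * v) = (x * u) * s y v) (x y : M) :
    (x * y) * s x y = x * y := by
  rw [← h, hidem, hidem]

theorem mul_op_eq_mul_mul_mul (hidem : ∀ x : M, x * x = x)
    (h : ∀ x y u v : M, (x * y) * (u * v) = (x * u) * s y v) (x y v : M) :
    x * s y v = (x * y) * (x * v) := by
  rw [h, hidem]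

theorem left_self_distrib (hidem : ∀ x : M, x * x = x)
    (h : ∀ x y u v : M, (x * y) * (u * v) = (x * u) * s y v) (x y z : M) :
    x * (y * z) = (x * y) * (x * z) := by
  symm
  calc (x * y) * (x * z)
      = (x * y) * ((x * z) * s x z) := by rw [mul_mul_op_eq_mul hidem h]
    _ = (x * (x * z)) * s y (s x z) := h ..
    _ = (x * s x z) * s y (s x z) := by rw [mul_op_eq_mul_mul_mul hidem h x x z, hidem]
    _ = (x * y) * (s x z * s x z) := (h ..).symm
    _ = (x * y) * s x z := by rw [hidem]
    _ = (x * x) * (y * z) := (h ..).symm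
    _ = x * (y * z) := by rw [hidem]

end GeneralizedEntropic

theorem stmt_3_general {M : Type*} [Mul M] (hidem : ∀ x : M, x * x = x) (s : M → M → M)
    (h : ∀ x y u v : M, (x * y) * (u * v) = (x * u) * s y v) (x y u v : M) :
    (x * y) * (u * v) = (x * u) * (y * v) :=
  calc (x * y) * (u * v)
      = (x * u) * s y v := h ..
    _ = ((x * u) * y) * ((x * u) * v) := GeneralizedEntropic.mul_op_eq_mul_mul_mul hidem h ..
    _ = (x * u) * (y * v) := (GeneralizedEntropic.left_self_distrib hidem h ..).symm

/-- An idempotent magma satisfying this instance of the generalized entropic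
property is medial. -/
theorem stmt_3 {M : Type*} [Mul M] (hidem : ∀ x : M, x * x = x)
    (s : FreeMagma (Fin 2))
    (h : ∀ x y u v : M, (x * y) * (u * v) = (x * u) * evalBin s y v) :
    ∀ x y u v : M, (x * y) * (u * v) = (x * u) * (y * v) :=
  stmt_3_general hidem (evalBin s) h
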